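/- arXiv:2001.02470 — 2 statements merged into one kernel-verified Lean document; each statement's English description precedes it below -/
import Mathlib

section
/- Let (R,m) be a Buchsbaum Noetherian local ring and let a be an ideal of R which is generated by a part x_1,...,x_n of a system of parameters of R. Then R is an a-relative Buchsbaum R-module; in particular cd(a,R) = n = ara(a,R). -/
/-!
Formalization of a statement from "A theory of relative generalized Cohen-Macaulay modules"
by Divaani-Aazar, Ghanbari Doust, Tousi and Zakeri.

Throughout, `R` is a commutative Noetherian ring and `M` a finitely generated `R`-module.
Conventions used below:
* `locH I i M` is the local cohomology module `H^i_I(M)` (Mathlib's `localCohomology`).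
* Conditions `cd(I,M) = c`, `ara(I,M) = n`, `f_I(M) = f`, `grade(I,M) = r` are expressed by
  the predicates `IsCd`, `IsAra`, `IsFinDim`, `IsGrade`.
* Sequences are given as functions `Fin r → R`; `pSpan M x i = ⟨x_0,…,x_{i-1}⟩M`.
* Koszul (co)homology is defined via the explicit (co)chain complex on the `p`-element
  subsets of `{0,…,n-1}`, and the canonical map `λ^i` into local cohomology is the structure
  map (at exponent 1) into the direct limit of Koszul cohomologies of powers of the sequence,
  which is the realization of `H^i_{⟨x⟩}(M)` used in the paper (2.1(iv)).
-/

open CategoryTheory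

noncomputable section

variable {R : Type} [CommRing R]

/-! ### Sequences: prefix spans, weak sequences, filter regular sequences, d-sequences -/

/-- `pSpan M x i` is the submodule `⟨x_0, …, x_{i-1}⟩M` of `M`. -/
def pSpan (M : Type) [AddCommGroup M] [Module R M] {r : ℕ} (x : Fin r → R) (i : Fin r) :
    Submodule R M :=
  Ideal.span (x '' {j | j < i}) • (⊤ : Submodule R M)

/-- `x_1, …, x_r` is an `I`-weak sequence on `M`:
`(⟨x_1,…,x_{i-1}⟩M :_M x_i) ⊆ (⟨x_1,…,x_{i-1}⟩M :_M I)` for all `i`. -/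
def IsWeakSeq (I : Ideal R) (M : Type) [AddCommGroup M] [Module R M] {r : ℕ}
    (x : Fin r → R) : Prop :=
  ∀ i : Fin r, ∀ m : M, x i • m ∈ pSpan M x i → ∀ a ∈ I, a • m ∈ pSpan M x i

/-- `x_1, …, x_r` is an `I`-filter regular sequence on `M`:
`(⟨x_1,…,x_{i-1}⟩M :_M x_i) ⊆ ⋃ₜ (⟨x_1,…,x_{i-1}⟩M :_M I^t)` for all `i`. -/
def IsFilterRegSeq (I : Ideal R) (M : Type) [AddCommGroup M] [Module R M] {r : ℕ}
    (x : Fin r → R) : Prop :=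
  ∀ i : Fin r, ∀ m : M, x i • m ∈ pSpan M x i →
    ∃ t : ℕ, ∀ a ∈ I ^ t, a • m ∈ pSpan M x i

/-- An unconditioned `I`-filter regular sequence: filter regular in any order. -/
def IsUncondFilterRegSeq (I : Ideal R) (M : Type) [AddCommGroup M] [Module R M] {r : ℕ}
    (x : Fin r → R) : Prop :=
  ∀ σ : Equiv.Perm (Fin r), IsFilterRegSeq I M (x ∘ σ)

/-- An unconditioned `I`-weak sequence: all positive powers, in any order, form an
`I`-weak sequence. -/
def IsUncondWeakSeq (I : Ideal R) (M : Type) [AddCommGroup M] [Module R M] {r : ℕ}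
    (x : Fin r → R) : Prop :=
  ∀ σ : Equiv.Perm (Fin r), ∀ α : Fin r → ℕ, (∀ k, 0 < α k) →
    IsWeakSeq I M fun k => x (σ k) ^ α k

/-- `x_1, …, x_r` is a d-sequence on `M`:
`(⟨x_1,…,x_{i-1}⟩M :_M x_i x_j) = (⟨x_1,…,x_{i-1}⟩M :_M x_j)` for all `i ≤ j`. -/
def IsDSeq (M : Type) [AddCommGroup M] [Module R M] {r : ℕ} (x : Fin r → R) : Prop :=
  ∀ i j : Fin r, i ≤ j → ∀ m : M,
    ((x i * x j) • m ∈ pSpan M x i ↔ x j • m ∈ pSpan M x i)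

/-- An u.s.d-sequence on `M`: all positive powers, in any order, form a d-sequence. -/
def IsUSDSeq (M : Type) [AddCommGroup M] [Module R M] {r : ℕ} (x : Fin r → R) : Prop :=
  ∀ σ : Equiv.Perm (Fin r), ∀ α : Fin r → ℕ, (∀ k, 0 < α k) →
    IsDSeq M fun k => x (σ k) ^ α k

/-! ### Local cohomology, cohomological dimension, arithmetic rank -/

/-- The `i`-th local cohomology module `H^i_I(M)`. -/
abbrev locH (I : Ideal R) (i : ℕ) (M : Type) [AddCommGroup M] [Module R M] : ModuleCat R :=
  (localCohomology I i).obj (ModuleCat.of R M)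

/-- `cd(I, M) = c`: the cohomological dimension of `I` on `M` equals `c`, i.e.
`H^c_I(M) ≠ 0` and `H^i_I(M) = 0` for all `i > c`. -/
def IsCd (I : Ideal R) (M : Type) [AddCommGroup M] [Module R M] (c : ℕ) : Prop :=
  Nontrivial (locH I c M) ∧ ∀ i : ℕ, c < i → Subsingleton (locH I i M)

/-- `f_I(M) = f`: the `I`-finiteness dimension of `M` equals `f`, i.e. `f` is the least
integer such that `H^f_I(M)` is not finitely generated. -/
def IsFinDim (I : Ideal R) (M : Type) [AddCommGroup M] [Module R M] (f : ℕ) : Prop :=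
  (∀ i : ℕ, i < f → Module.Finite R (locH I i M)) ∧ ¬ Module.Finite R (locH I f M)

/-- `M` is `I`-relative generalized Cohen-Macaulay: `cd(I,M) ≤ 0` or `cd(I,M) = f_I(M)`. -/
def IsRelGCM (I : Ideal R) (M : Type) [AddCommGroup M] [Module R M] : Prop :=
  (∀ i : ℕ, 0 < i → Subsingleton (locH I i M)) ∨
    ∃ c : ℕ, IsCd I M c ∧ IsFinDim I M c

/-- `ara(I, M) = n`: the arithmetic rank of `I` with respect to `M` equals `n`, i.e. `n` is the
least integer such that there are `x_1, …, x_n ∈ R` with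
`Rad(⟨x_1,…,x_n⟩ + Ann M) = Rad(I + Ann M)`. -/
def IsAra (I : Ideal R) (M : Type) [AddCommGroup M] [Module R M] (n : ℕ) : Prop :=
  IsLeast {k : ℕ | ∃ x : Fin k → R,
    (Ideal.span (Set.range x) + Module.annihilator R M).radical
      = (I + Module.annihilator R M).radical} n

/-- `x_1, …, x_c` is an `I`-relative system of parameters of `M` (where `c = cd(I,M)`):
the `x_i` lie in `I` and `Rad(⟨x_1,…,x_c⟩ + Ann M) = Rad(I + Ann M)`. -/
def IsRsop (I : Ideal R) (M : Type) [AddCommGroup M] [Module R M] {c : ℕ}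
    (x : Fin c → R) : Prop :=
  (∀ j, x j ∈ I) ∧
    (Ideal.span (Set.range x) + Module.annihilator R M).radical
      = (I + Module.annihilator R M).radical

/-! ### Relative Buchsbaum and relative quasi Buchsbaum modules -/

/-- `M` is `I`-relative Buchsbaum: `cd(I,M) = ara(I,M)` and every `I`-relative system of
parameters of `M` is an `I`-weak sequence on `M`. -/
def IsRelBuchsbaum (I : Ideal R) (M : Type) [AddCommGroup M] [Module R M] : Prop :=
  ∃ c : ℕ, IsCd I M c ∧ IsAra I M c ∧
    ∀ x : Fin c → R, IsRsop I M x → IsWeakSeq I M x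

/-- `M` is `I`-relative quasi Buchsbaum: `cd(I,M) = ara(I,M)` and every `I`-relative system of
parameters of `M` contained in `I²` is an `I`-weak sequence on `M`. -/
def IsRelQuasiBuchsbaum (I : Ideal R) (M : Type) [AddCommGroup M] [Module R M] : Prop :=
  ∃ c : ℕ, IsCd I M c ∧ IsAra I M c ∧
    ∀ x : Fin c → R, IsRsop I M x → (∀ j, x j ∈ I ^ 2) → IsWeakSeq I M x

/-!
`H^n_I(R)` is the direct limit of the groups `Extⁿ(R/(y₁^t, …, yₙ^t), R)`. Adding one element `x`
to the sequence is controlled by the exact sequences `0 → R/(A : x^t) → R/A → R/(A, x^t) → 0`: by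
induction the limit vanishes in degrees above `n`, and, because `x` annihilates `(A : x^t)/A`, the
limit in degree `n` is generated by classes that behave like `1/(y₁⋯yₙ)^t`. These are nonzero by
the monomial property `(y₁⋯yₙ)^t ∉ (y₁^(t+n+1), …, yₙ^(t+n+1))`, so `cd(I, R) = n`. Together with
`d - n` further parameters, the generators of `I` up to radical form a system of parameters of `R`.
Hence there are at least `n` of them, by Krull's height theorem, and `n` of them form a weak
sequence, being part of a system of parameters.
-/

section ExtComparison

open Opposite

universe u v w

lemma homologyπ_eq_zero_iff {R : Type u} [Ring R] (K : CochainComplex (ModuleCat.{v} R) ℕ)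
    {i j : ℕ} (hij : (ComplexShape.up ℕ).prev j = i) (z : K.cycles j) :
    K.homologyπ j z = 0 ↔ ∃ g : K.X i, K.d i j g = K.iCycles j z := by
  have exact_toCycles := ShortComplex.exact_of_g_is_cokernel
    (ShortComplex.mk _ _ (K.toCycles_comp_homologyπ i j)) (K.homologyIsCokernel i j hij)
  rw [ShortComplex.moduleCat_exact_iff] at exact_toCycles
  have iCycles_injective : Function.Injective (K.iCycles j) :=
    (ModuleCat.mono_iff_injective _).1 inferInstance
  have iCycles_toCycles (g : K.X i) : K.iCycles j (K.toCycles i j g) = K.d i j g := by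
    rw [← ConcreteCategory.comp_apply, K.toCycles_i]
  constructor
  · intro hz
    obtain ⟨g, rfl⟩ := exact_toCycles z hz
    exact ⟨g, (iCycles_toCycles g).symm⟩
  · rintro ⟨g, hg⟩
    obtain rfl := iCycles_injective ((iCycles_toCycles g).trans hg)
    rw [← ConcreteCategory.comp_apply, K.toCycles_comp_homologyπ]
    rfl

lemma exists_iCycles_eq {R : Type u} [Ring R] (K : CochainComplex (ModuleCat.{v} R) ℕ)
    {n : ℕ} (f : K.X n) (hf : K.d n (n + 1) f = 0) : ∃ z : K.cycles n, K.iCycles n z = f := by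
  have exact_iCycles := ShortComplex.exact_of_f_is_kernel
    (ShortComplex.mk _ _ (K.iCycles_d n (n + 1))) (K.cyclesIsKernel n (n + 1) (by simp))
  exact (ShortComplex.moduleCat_exact_iff _).1 exact_iCycles f hf

variable {R : Type u} [CommRing R] {C : Type w} [Category.{v} C] [Abelian C] [Linear R C]
  [HasExt.{v} C] {X X' Y : C} {n : ℕ}

lemma extMk_eq_zero_iff_exists (P : ProjectiveResolution X) {m : ℕ}
    (hm : (ComplexShape.up ℕ).prev n = m) (f : P.complex.X n ⟶ Y)
    (hf : P.complex.d (n + 1) n ≫ f = 0) :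
    P.extMk f (n + 1) rfl hf = 0 ↔ ∃ g, P.complex.d n m ≫ g = f := by
  rcases n with _ | n
  · obtain rfl : m = 0 := by rw [← hm]; simp
    simp only [← P.extEquivCohomologyClass.apply_eq_iff_eq,
      ProjectiveResolution.extEquivCohomologyClass_extMk,
      ProjectiveResolution.extEquivCohomologyClass_zero,
      CochainComplex.HomComplex.CohomologyClass.mk_eq_zero_iff]
    rw [CochainComplex.HomComplex.Cocycle.toSingleMk_mem_coboundaries_iff _ _ _ _ _ 1 (by simp)]
    have hz : Limits.IsZero (P.cochainComplex.X 1) :=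
      CochainComplex.isZero_of_isStrictlyLE P.cochainComplex 0 1 (by simp)
    constructor
    · rintro ⟨g, hg⟩
      refine ⟨0, ?_⟩
      rw [← cancel_epi (P.cochainComplexXIso (-(0 : ℕ)) 0 rfl).hom, Limits.comp_zero,
        Limits.comp_zero, ← hg, hz.eq_of_src g 0, Limits.comp_zero]
    · rintro ⟨g, rfl⟩
      exact ⟨0, by simp⟩
  · obtain rfl : m = n := by rw [← hm]; simp
    exact P.extMk_eq_zero_iff f _ rfl hf m rfl

variable (R) in
/-- A cocycle of degree `n` of `Hom(K, Y)`, seen as a morphism `K.X n ⟶ Y`. -/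
def cocycleHom (K : ChainComplex C ℕ) (Y : C) (n : ℕ) :
    (K.linearYonedaObj R Y).cycles n →+ (K.X n ⟶ Y) :=
  ((K.linearYonedaObj R Y).iCycles n).hom.toAddMonoidHom

omit [HasExt.{v} C] in
lemma d_comp_cocycleHom (K : ChainComplex C ℕ) (z : (K.linearYonedaObj R Y).cycles n) :
    K.d (n + 1) n ≫ cocycleHom R K Y n z = 0 :=
  congrArg (fun φ => φ.hom z) ((K.linearYonedaObj R Y).iCycles_d n (n + 1))

variable (R) in
/-- The map sending a cocycle `P.X n ⟶ Y` to its class in `Extⁿ(X, Y)`, where `P` is a projective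
resolution of `X`. -/
def cyclesToExt (P : ProjectiveResolution X) (Y : C) (n : ℕ) :
    (P.complex.linearYonedaObj R Y).cycles n →+ Abelian.Ext X Y n :=
  AddMonoidHom.mk' (fun z => P.extMk (cocycleHom R P.complex Y n z) (n + 1) rfl
    (d_comp_cocycleHom P.complex z)) fun z z' => by simp only [P.add_extMk, map_add]

lemma cyclesToExt_surjective (P : ProjectiveResolution X) :
    Function.Surjective (cyclesToExt R P Y n) := fun α => by
  obtain ⟨f, hf, rfl⟩ := P.extMk_surjective α (n + 1) rfl
  obtain ⟨z, rfl⟩ := exists_iCycles_eq (P.complex.linearYonedaObj R Y) f hf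
  exact ⟨z, rfl⟩

lemma cyclesToExt_eq_zero_iff (P : ProjectiveResolution X)
    (z : (P.complex.linearYonedaObj R Y).cycles n) :
    cyclesToExt R P Y n z = 0 ↔ (P.complex.linearYonedaObj R Y).homologyπ n z = 0 := by
  rw [homologyπ_eq_zero_iff _ rfl]
  exact extMk_eq_zero_iff_exists P rfl _ (d_comp_cocycleHom P.complex z)

lemma homologyπ_surjective {R : Type u} [Ring R] (K : CochainComplex (ModuleCat.{v} R) ℕ) (n : ℕ) :
    Function.Surjective (K.homologyπ n).hom.toAddMonoidHom :=
  (ModuleCat.epi_iff_surjective _).1 inferInstance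

variable (R) in
/-- The isomorphism between the cohomology of `Hom(P, Y)`, for `P` a projective resolution of `X`,
and the group `Extⁿ(X, Y)` of morphisms in the derived category. -/
def homologyAddEquivExt (P : ProjectiveResolution X) (Y : C) (n : ℕ) :
    (P.complex.linearYonedaObj R Y).homology n ≃+ Abelian.Ext X Y n :=
  (QuotientAddGroup.quotientKerEquivOfSurjective _ (homologyπ_surjective _ n)).symm.trans <|
    (QuotientAddGroup.quotientAddEquivOfEq
      (AddSubgroup.ext fun z => (cyclesToExt_eq_zero_iff P z).symm)).trans
    (QuotientAddGroup.quotientKerEquivOfSurjective _ (cyclesToExt_surjective P))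

lemma homologyAddEquivExt_homologyπ (P : ProjectiveResolution X)
    (z : (P.complex.linearYonedaObj R Y).cycles n) :
    homologyAddEquivExt R P Y n ((P.complex.linearYonedaObj R Y).homologyπ n z) =
      cyclesToExt R P Y n z := by
  have : (QuotientAddGroup.quotientKerEquivOfSurjective _ (homologyπ_surjective _ n)).symm
    ((P.complex.linearYonedaObj R Y).homologyπ n z) = QuotientAddGroup.mk z :=
    (AddEquiv.symm_apply_eq _).2 rfl
  rw [homologyAddEquivExt, AddEquiv.trans_apply]
  erw [this]
  rfl

/-- The morphism of cochain complexes `L.unop ⟶ K.unop` induced by `φ : K ⟶ L`. -/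
def unopMap {K L : ChainComplex (ModuleCat.{v} R)ᵒᵖ ℕ} (φ : K ⟶ L) : L.unop ⟶ K.unop :=
  (HomologicalComplex.unopFunctor _ _).map φ.op

lemma homologyUnop_inv_naturality {K L : ChainComplex (ModuleCat.{v} R)ᵒᵖ ℕ} (φ : K ⟶ L) (n : ℕ) :
    (HomologicalComplex.homologyMap φ n).unop ≫ (K.homologyUnop n).inv =
      (L.homologyUnop n).inv ≫ HomologicalComplex.homologyMap (unopMap φ) n := by
  have naturality : HomologicalComplex.homologyMap φ n ≫ (L.unop.homologyOp n).hom =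
      (K.unop.homologyOp n).hom ≫ (HomologicalComplex.homologyMap (unopMap φ) n).op :=
    HomologicalComplex.homologyOp_hom_naturality (unopMap φ) n
  rw [Iso.comp_inv_eq, Category.assoc, Iso.eq_inv_comp]
  exact congrArg Quiver.Hom.unop naturality

variable (R) in
/-- The morphism `Hom(K', Y) ⟶ Hom(K, Y)` induced by a morphism of complexes `K ⟶ K'`. -/
def linearYonedaObjMap {K K' : ChainComplex C ℕ} (φ : K ⟶ K') (Y : C) :
    K'.linearYonedaObj R Y ⟶ K.linearYonedaObj R Y :=
  unopMap ((((linearYoneda R C).obj Y).rightOp.mapHomologicalComplex _).map φ)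

omit [HasExt.{v} C] in
lemma cocycleHom_cyclesMap {K K' : ChainComplex C ℕ} (φ : K ⟶ K')
    (z : (K'.linearYonedaObj R Y).cycles n) :
    cocycleHom R K Y n (HomologicalComplex.cyclesMap (linearYonedaObjMap R φ Y) n z) =
      φ.f n ≫ cocycleHom R K' Y n z :=
  congrArg (fun ψ => ψ.hom z) (HomologicalComplex.cyclesMap_i (linearYonedaObjMap R φ Y) n)

lemma cyclesToExt_cyclesMap (g : X ⟶ X') (P : ProjectiveResolution X) (P' : ProjectiveResolution X')
    (φ : P.Hom P' g) (z : (P'.complex.linearYonedaObj R Y).cycles n) :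
    cyclesToExt R P Y n (HomologicalComplex.cyclesMap (linearYonedaObjMap R φ.hom Y) n z) =
      (Abelian.Ext.mk₀ g).comp (cyclesToExt R P' Y n z) (zero_add n) := by
  simp only [cyclesToExt, AddMonoidHom.mk'_apply, cocycleHom_cyclesMap,
    ProjectiveResolution.mk₀_comp_extMk _ _ _ _ φ]

variable [EnoughProjectives C]

variable (R) in
/-- The comparison between the left derived functors of `Hom(-, Y)` and `Abelian.Ext`. -/
def derivedExtAddEquiv (X Y : C) (n : ℕ) :
    ((Ext R C n).obj (op X)).obj Y ≃+ Abelian.Ext X Y n :=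
  ((projectiveResolution X).isoExt (R := R) n Y).toLinearEquiv.toAddEquiv.trans
    (homologyAddEquivExt R (projectiveResolution X) Y n)

omit [HasExt.{v} C] in
lemma isoExt_hom_naturality (g : X ⟶ X') (P : ProjectiveResolution X) (P' : ProjectiveResolution X')
    (φ : P.Hom P' g) (Y : C) (n : ℕ) :
    ((Ext R C n).map g.op).app Y ≫ (P.isoExt n Y).hom =
      (P'.isoExt n Y).hom ≫ HomologicalComplex.homologyMap (linearYonedaObjMap R φ.hom Y) n := by
  let F := ((linearYoneda R C).obj Y).rightOp
  let F' := F.mapHomologicalComplex (ComplexShape.down ℕ)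
  have comm : φ.hom.f 0 ≫ P'.π.f 0 = P.π.f 0 ≫ g := by
    rw [φ.hom_f_zero_comp_π_f_zero, ChainComplex.single₀_map_f_zero]
    rfl
  have leftDerived_naturality :
      ((F.leftDerived n).map g).unop ≫ (P.isoLeftDerivedObj F n).inv.unop =
        (P'.isoLeftDerivedObj F n).inv.unop ≫
          (HomologicalComplex.homologyMap (F'.map φ.hom) n).unop :=
    congrArg Quiver.Hom.unop
      (ProjectiveResolution.isoLeftDerivedObj_inv_naturality g P P' φ.hom comm F n)
  change ((F.leftDerived n).map g).unop ≫ (P.isoLeftDerivedObj F n).inv.unop ≫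
      ((F'.obj P.complex).homologyUnop n).inv =
    ((P'.isoLeftDerivedObj F n).inv.unop ≫ ((F'.obj P'.complex).homologyUnop n).inv) ≫
      HomologicalComplex.homologyMap (unopMap (F'.map φ.hom)) n
  -- Explicit terms: the objects agree only up to unfolding, so `rw` does not apply.
  refine (Category.assoc _ _ _).symm.trans <| (congrArg
    (· ≫ ((F'.obj P.complex).homologyUnop n).inv) leftDerived_naturality).trans <|
    (Category.assoc _ _ _).trans <| (congrArg ((P'.isoLeftDerivedObj F n).inv.unop ≫ ·)
      (homologyUnop_inv_naturality (F'.map φ.hom) n)).trans (Category.assoc _ _ _).symm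

lemma derivedExtAddEquiv_map (g : X ⟶ X') (e : ((Ext R C n).obj (op X')).obj Y) :
    derivedExtAddEquiv R X Y n (((Ext R C n).map g.op).app Y e) =
      (Abelian.Ext.mk₀ g).comp (derivedExtAddEquiv R X' Y n e) (zero_add n) := by
  let P := projectiveResolution X
  let P' := projectiveResolution X'
  let φ : P.Hom P' g := ⟨ProjectiveResolution.lift g P P', by
    exact congrArg (·.f 0) (ProjectiveResolution.lift_commutes g P P')⟩
  obtain ⟨z, hz⟩ := homologyπ_surjective _ n ((P'.isoExt (R := R) n Y).hom e)
  have hz : (P'.complex.linearYonedaObj R Y).homologyπ n z = (P'.isoExt n Y).hom e := hz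
  calc derivedExtAddEquiv R X Y n (((Ext R C n).map g.op).app Y e)
      = homologyAddEquivExt R P Y n ((P.isoExt n Y).hom (((Ext R C n).map g.op).app Y e)) := rfl
    _ = homologyAddEquivExt R P Y n (HomologicalComplex.homologyMap
          (linearYonedaObjMap R φ.hom Y) n ((P'.isoExt n Y).hom e)) := by
        rw [← ConcreteCategory.comp_apply, isoExt_hom_naturality g P P' φ,
          ConcreteCategory.comp_apply]
    _ = homologyAddEquivExt R P Y n ((P.complex.linearYonedaObj R Y).homologyπ n
          (HomologicalComplex.cyclesMap (linearYonedaObjMap R φ.hom Y) n z)) := by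
        rw [← hz, ← ConcreteCategory.comp_apply, HomologicalComplex.homologyπ_naturality,
          ConcreteCategory.comp_apply]
    _ = (Abelian.Ext.mk₀ g).comp
          (homologyAddEquivExt R P' Y n ((P'.isoExt n Y).hom e)) (zero_add n) := by
        rw [homologyAddEquivExt_homologyπ, cyclesToExt_cyclesMap, ← hz,
          homologyAddEquivExt_homologyπ]

end ExtComparison

section CyclicModules

open Limits Opposite Abelian

universe u

variable {R : Type u} [CommRing R] {A B D : Ideal R} {c c' : R} {M : ModuleCat.{u} R} {n : ℕ}

/-- The homomorphism `R ⧸ A ⟶ R ⧸ B` sending `1` to `c`. -/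
def cyclicHom (c : R) (h : ∀ a ∈ A, c * a ∈ B) : ModuleCat.of R (R ⧸ A) ⟶ ModuleCat.of R (R ⧸ B) :=
  ModuleCat.ofHom (Submodule.mapQ A B (LinearMap.mulLeft R c) h)

lemma cyclicHom_mk (h : ∀ a ∈ A, c * a ∈ B) (r : R) :
    cyclicHom c h (Ideal.Quotient.mk A r) = Ideal.Quotient.mk B (c * r) := rfl

lemma cyclicHom_ext {f g : ModuleCat.of R (R ⧸ A) ⟶ M}
    (h : f (Ideal.Quotient.mk A 1) = g (Ideal.Quotient.mk A 1)) : f = g := by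
  ext
  exact h

lemma mul_mem_of_comp (h : ∀ a ∈ A, c * a ∈ B) (h' : ∀ b ∈ B, c' * b ∈ D) :
    ∀ a ∈ A, c * c' * a ∈ D := fun a ha => by
  rw [mul_right_comm, mul_comm]
  exact h' _ (h a ha)

lemma cyclicHom_comp (h : ∀ a ∈ A, c * a ∈ B) (h' : ∀ b ∈ B, c' * b ∈ D) :
    cyclicHom c h ≫ cyclicHom c' h' = cyclicHom (c * c') (mul_mem_of_comp h h') :=
  cyclicHom_ext <| by
    change Ideal.Quotient.mk D (c' * (c * 1)) = Ideal.Quotient.mk D (c * c' * 1)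
    rw [mul_one, mul_one, mul_comm]

lemma smul_cyclicHom (m : R) (h : ∀ a ∈ A, c * a ∈ B) :
    m • cyclicHom c h =
      cyclicHom (m * c) (fun a ha => by rw [mul_assoc]; exact B.mul_mem_left m (h a ha)) :=
  cyclicHom_ext <| by
    change Ideal.Quotient.mk B (m * (c * 1)) = Ideal.Quotient.mk B (m * c * 1)
    rw [mul_assoc]

/-- The map `Extⁿ(R ⧸ B, M) → Extⁿ(R ⧸ A, M)` induced by the homomorphism `R ⧸ A ⟶ R ⧸ B`
sending `1` to `c`. -/
def extPull (c : R) (h : ∀ a ∈ A, c * a ∈ B) :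
    Ext (ModuleCat.of R (R ⧸ B)) M n →ₗ[R] Ext (ModuleCat.of R (R ⧸ A)) M n where
  toFun α := (Ext.mk₀ (cyclicHom c h)).comp α (zero_add n)
  map_add' _ _ := Ext.comp_add ..
  map_smul' _ _ := Ext.comp_smul ..

lemma extPull_apply (h : ∀ a ∈ A, c * a ∈ B) (α : Ext (ModuleCat.of R (R ⧸ B)) M n) :
    extPull c h α = (Ext.mk₀ (cyclicHom c h)).comp α (zero_add n) := rfl

lemma extPull_congr (hc : c = c') (h : ∀ a ∈ A, c * a ∈ B)
    (α : Ext (ModuleCat.of R (R ⧸ B)) M n) : extPull c h α = extPull c' (hc ▸ h) α := by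
  subst hc
  rfl

lemma extPull_extPull (h : ∀ a ∈ A, c * a ∈ B) (h' : ∀ b ∈ B, c' * b ∈ D)
    (α : Ext (ModuleCat.of R (R ⧸ D)) M n) :
    extPull c h (extPull c' h' α) = extPull (c * c') (mul_mem_of_comp h h') α := by
  simp only [extPull_apply, Ext.mk₀_comp_mk₀_assoc, cyclicHom_comp]

lemma smul_extPull (m : R) (h : ∀ a ∈ A, c * a ∈ B) (α : Ext (ModuleCat.of R (R ⧸ B)) M n) :
    m • extPull c h α =
      extPull (m * c) (fun a ha => by rw [mul_assoc]; exact B.mul_mem_left m (h a ha)) α := by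
  rw [extPull_apply, extPull_apply, ← Ext.smul_comp, ← Ext.mk₀_smul, smul_cyclicHom]

/-- The map `Extⁿ(R ⧸ B, M) → Extⁿ(R ⧸ A, M)` induced by the projection `R ⧸ A ⟶ R ⧸ B`. -/
def extRes (h : A ≤ B) : Ext (ModuleCat.of R (R ⧸ B)) M n →ₗ[R] Ext (ModuleCat.of R (R ⧸ A)) M n :=
  extPull 1 fun a ha => by rw [one_mul]; exact h ha

lemma extRes_extPull (h : A ≤ B) (h' : ∀ b ∈ B, c * b ∈ D) (α : Ext (ModuleCat.of R (R ⧸ D)) M n) :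
    extRes h (extPull c h' α) = extPull c (fun a ha => h' a (h ha)) α :=
  (extPull_extPull _ _ α).trans (extPull_congr (one_mul c) _ α)

lemma extPull_extRes (h : ∀ a ∈ A, c * a ∈ B) (h' : B ≤ D) (α : Ext (ModuleCat.of R (R ⧸ D)) M n) :
    extPull c h (extRes h' α) = extPull c (fun a ha => h' (h a ha)) α :=
  (extPull_extPull _ _ α).trans (extPull_congr (mul_one c) _ α)

lemma extRes_extRes (h : A ≤ B) (h' : B ≤ D) (α : Ext (ModuleCat.of R (R ⧸ D)) M n) :
    extRes h (extRes h' α) = extRes (h.trans h') α :=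
  extRes_extPull h _ α

lemma extRes_self (α : Ext (ModuleCat.of R (R ⧸ A)) M n) : extRes le_rfl α = α := by
  have : cyclicHom (1 : R) (A := A) (B := A) (fun a ha => by rwa [one_mul]) = 𝟙 _ :=
    cyclicHom_ext <| by
      rw [cyclicHom_mk, mul_one]
      rfl
  exact (congrArg (fun f => (Ext.mk₀ f).comp α (zero_add n)) this).trans (Ext.mk₀_id_comp α)

/-- The direct limit of the groups `Extⁿ(R ⧸ J t, M)` vanishes. -/
def ExtColimitVanishes (J : ℕ → Ideal R) (M : ModuleCat.{u} R) (n : ℕ) : Prop :=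
  ∀ t, ∀ α : Ext (ModuleCat.of R (R ⧸ J t)) M n, ∃ s, ∃ h : J s ≤ J t, extRes h α = 0

lemma ExtColimitVanishes.of_cofinal {J K : ℕ → Ideal R} (hJ : ExtColimitVanishes J M n)
    (hJK : ∀ t, ∃ s, J s ≤ K t) (hKJ : ∀ t, ∃ s, K s ≤ J t) : ExtColimitVanishes K M n := by
  intro t α
  obtain ⟨s, hs⟩ := hJK t
  obtain ⟨s', hs', vanishing⟩ := hJ s (extRes hs α)
  obtain ⟨r, hr⟩ := hKJ s'
  exact ⟨r, hr.trans (hs'.trans hs), by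
    rw [← extRes_extRes hr (hs'.trans hs), ← extRes_extRes hs' hs, vanishing, map_zero]⟩

lemma extColimitVanishes_iff_of_antitone {J : ℕ → Ideal R} (hJ : Antitone J) :
    ExtColimitVanishes J M n ↔ ∀ t, ∀ α : Ext (ModuleCat.of R (R ⧸ J t)) M n,
      ∃ s, ∃ h : t ≤ s, extRes (hJ h) α = 0 := by
  refine ⟨fun vanishes t α => ?_, fun vanishes t α => ?_⟩
  · obtain ⟨s, hs, vanishing⟩ := vanishes t α
    exact ⟨max t s, le_max_left t s, by
      rw [← extRes_extRes (hJ (le_max_right t s)) hs, vanishing, map_zero]⟩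
  · obtain ⟨s, hs, vanishing⟩ := vanishes t α
    exact ⟨s, hJ hs, vanishing⟩

lemma ringModIdeals_map {E : Type} [SmallCategory E] (F : E ⥤ Ideal R) {s t : E} (u : s ⟶ t) :
    (localCohomology.ringModIdeals F).map u =
      cyclicHom 1 (fun a ha => by rw [one_mul]; exact leOfHom (F.map u) ha) :=
  ModuleCat.hom_ext <| Submodule.linearMap_qext _ <| LinearMap.ext fun r =>
    congrArg (Ideal.Quotient.mk _) (one_mul r).symm

theorem subsingleton_localCohomology_iff (I : Ideal R) :
    Subsingleton ((localCohomology I n).obj M) ↔ ExtColimitVanishes (I ^ ·) M n := by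
  have : PreservesFilteredColimitsOfSize.{0, 0} (forget (ModuleCat.{u} R)) :=
    preservesSmallestFilteredColimits_of_preservesFilteredColimits _
  let F := localCohomology.diagram (localCohomology.idealPowersDiagram I) n ⋙ (evaluation _ _).obj M
  let toExt (t : ℕ) : F.obj (op (op t)) ≃+ Ext (ModuleCat.of R (R ⧸ I ^ t)) M n :=
    derivedExtAddEquiv R _ M n
  have toExt_map {s t : ℕ} (h : t ≤ s) (e : F.obj (op (op t))) :
      toExt s (F.map (homOfLE h).op.op e) = extRes (Ideal.pow_le_pow_right h) (toExt t e) := by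
    refine (derivedExtAddEquiv_map _ e).trans ?_
    rw [Quiver.Hom.unop_op, ringModIdeals_map]
    rfl
  have colimit_iso : (localCohomology I n).obj M ≅ colimit F :=
    colimitObjIsoColimitCompEvaluation _ _
  rw [colimit_iso.toLinearEquiv.toEquiv.subsingleton_congr,
    extColimitVanishes_iff_of_antitone fun t s h => Ideal.pow_le_pow_right h]
  constructor
  · intro _ t α
    obtain ⟨e, rfl⟩ := (toExt t).surjective α
    obtain ⟨s, u, hu⟩ := Concrete.colimit_rep_eq_zero _ F (op (op t)) e (Subsingleton.elim _ _)
    refine ⟨s.unop.unop, leOfHom u.unop.unop, ?_⟩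
    rw [← toExt_map, EmbeddingLike.map_eq_zero_iff]
    exact hu
  · intro vanishes
    refine subsingleton_of_forall_eq 0 fun x => ?_
    obtain ⟨t, e, rfl⟩ := Concrete.colimit_exists_rep F x
    obtain ⟨s, hs, vanishing⟩ := vanishes t.unop.unop (toExt _ e)
    rw [← toExt_map hs, EmbeddingLike.map_eq_zero_iff] at vanishing
    rw [← colimit.w F (homOfLE hs).op.op]
    exact (congrArg (colimit.ι F (op (op s))) vanishing).trans (map_zero _)

end CyclicModules

section ColonSequence

open Abelian

universe u

variable {R : Type u} [CommRing R] {A A' B B' : Ideal R} {z z' d : R} {M : ModuleCat.{u} R} {n : ℕ}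

lemma mul_mem_of_mem_colon_singleton : ∀ a ∈ A.colon {z}, z * a ∈ A := fun a ha => by
  rw [mul_comm]
  exact Submodule.mem_colon_singleton.1 ha

/-- The complex `0 → R ⧸ (A : z) → R ⧸ A → R ⧸ B → 0`, where `B = A + (z)`. -/
def colonComplex (hB : B = A ⊔ Ideal.span {z}) : ShortComplex (ModuleCat.{u} R) :=
  ShortComplex.mk (cyclicHom z (A := A.colon {z}) (B := A) mul_mem_of_mem_colon_singleton)
    (cyclicHom 1 (A := A) (B := B) fun a ha => by
      rw [one_mul, hB]
      exact Ideal.mem_sup_left ha) <| by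
    rw [cyclicHom_comp]
    refine cyclicHom_ext ?_
    rw [cyclicHom_mk, mul_one, mul_one]
    exact Ideal.Quotient.eq_zero_iff_mem.2
      (hB ▸ Ideal.mem_sup_right (Ideal.mem_span_singleton_self z))

lemma colonComplex_shortExact (hB : B = A ⊔ Ideal.span {z}) : (colonComplex hB).ShortExact where
  exact := by
    refine (ShortComplex.moduleCat_exact_iff _).2 fun x hx => ?_
    obtain ⟨r, rfl⟩ := Ideal.Quotient.mk_surjective x
    have r_mem : 1 * r ∈ B := Ideal.Quotient.eq_zero_iff_mem.1 hx
    rw [one_mul, hB] at r_mem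
    obtain ⟨a, ha, b, hb, rfl⟩ := Submodule.mem_sup.1 r_mem
    obtain ⟨q, rfl⟩ := Ideal.mem_span_singleton.1 hb
    exact ⟨Ideal.Quotient.mk _ q, Ideal.Quotient.eq.2 (by simpa using ha)⟩
  mono_f := by
    refine (ModuleCat.mono_iff_injective _).2 ((injective_iff_map_eq_zero _).2 fun x hx => ?_)
    obtain ⟨r, rfl⟩ := Ideal.Quotient.mk_surjective x
    have zr_mem : z * r ∈ A := Ideal.Quotient.eq_zero_iff_mem.1 hx
    refine Ideal.Quotient.eq_zero_iff_mem.2 (Submodule.mem_colon_singleton.2 ?_)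
    rwa [smul_eq_mul, mul_comm]
  epi_g := by
    refine (ModuleCat.epi_iff_surjective _).2 fun x => ?_
    obtain ⟨r, rfl⟩ := Ideal.Quotient.mk_surjective x
    exact ⟨Ideal.Quotient.mk _ r, congrArg _ (one_mul r)⟩

/-- The connecting homomorphism `Extⁿ(R ⧸ (A : z), M) → Extⁿ⁺¹(R ⧸ B, M)` of the short exact
sequence `0 → R ⧸ (A : z) → R ⧸ A → R ⧸ B → 0`, where `B = A + (z)`. -/
def extConnecting (hB : B = A ⊔ Ideal.span {z}) :
    Ext (ModuleCat.of R (R ⧸ A.colon {z})) M n →ₗ[R] Ext (ModuleCat.of R (R ⧸ B)) M (n + 1) where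
  toFun f := (colonComplex_shortExact hB).extClass.comp f (add_comm 1 n)
  map_add' _ _ := Ext.comp_add ..
  map_smul' _ _ := Ext.comp_smul ..

lemma exists_extConnecting_eq (hB : B = A ⊔ Ideal.span {z}) (hAB : A ≤ B)
    (e : Ext (ModuleCat.of R (R ⧸ B)) M (n + 1)) (he : extRes hAB e = 0) :
    ∃ f, extConnecting hB f = e :=
  Ext.contravariant_sequence_exact₃ (colonComplex_shortExact hB) _ e he (add_comm 1 n)

lemma exists_extPull_eq_of_extConnecting_eq_zero (hB : B = A ⊔ Ideal.span {z})
    (f : Ext (ModuleCat.of R (R ⧸ A.colon {z})) M n) (hf : extConnecting hB f = 0) :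
    ∃ g, extPull z mul_mem_of_mem_colon_singleton g = f :=
  Ext.contravariant_sequence_exact₁ (colonComplex_shortExact hB) _ f (add_comm 1 n) hf

lemma extClass_comp_naturality {C : Type*} [Category* C] [Abelian C] [HasExt C]
    {S S' : ShortComplex C} (hS : S.ShortExact) (hS' : S'.ShortExact) (φ : S' ⟶ S) {Y : C}
    (f : Ext S.X₁ Y n) :
    (Ext.mk₀ φ.τ₃).comp (hS.extClass.comp f (add_comm 1 n)) (zero_add (n + 1)) =
      hS'.extClass.comp ((Ext.mk₀ φ.τ₁).comp f (zero_add n)) (add_comm 1 n) := by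
  rw [← Ext.comp_assoc (a₁₂ := 1) _ _ _ (by omega) (by omega) (by omega),
    ← hS'.extClass_naturality hS φ,
    Ext.comp_assoc (a₂₃ := n) _ _ _ (by omega) (by omega) (by omega)]

lemma mul_mem_colon_of_mem_colon (hA : A' ≤ A) (hz : z' = d * z) :
    ∀ a ∈ A'.colon {z'}, d * a ∈ A.colon {z} := fun a ha => by
  rw [Submodule.mem_colon_singleton, smul_eq_mul] at ha ⊢
  rw [mul_right_comm, mul_comm, ← hz]
  exact hA ha

lemma extRes_extConnecting (hA : A' ≤ A) (hz : z' = d * z) (hB : B = A ⊔ Ideal.span {z})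
    (hB' : B' = A' ⊔ Ideal.span {z'}) (hBB' : B' ≤ B)
    (f : Ext (ModuleCat.of R (R ⧸ A.colon {z})) M n) :
    extRes hBB' (extConnecting hB f) =
      extConnecting hB' (extPull d (mul_mem_colon_of_mem_colon hA hz) f) := by
  let φ : colonComplex hB' ⟶ colonComplex hB :=
    { τ₁ := cyclicHom d (mul_mem_colon_of_mem_colon hA hz)
      τ₂ := cyclicHom 1 fun a ha => by rw [one_mul]; exact hA ha
      τ₃ := cyclicHom 1 fun a ha => by rw [one_mul]; exact hBB' ha
      comm₁₂ := by
        simp only [colonComplex, cyclicHom_comp, mul_one, hz]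
      comm₂₃ := by
        simp only [colonComplex, cyclicHom_comp] }
  exact extClass_comp_naturality _ _ φ f

end ColonSequence

section IdealTower

open Abelian

universe u

variable {R : Type u} [CommRing R] {A B : ℕ → Ideal R} {x w : R} {M : ModuleCat.{u} R} {n : ℕ}

lemma antitone_of_eq_sup_span_pow (hA : Antitone A) (hB : ∀ t, B t = A t ⊔ Ideal.span {x ^ t}) :
    Antitone B := fun t s hts => by
  rw [hB, hB]
  exact sup_le_sup (hA hts) (Ideal.span_singleton_le_span_singleton.2 (pow_dvd_pow x hts))

lemma le_of_eq_sup_span_pow (hB : ∀ t, B t = A t ⊔ Ideal.span {x ^ t}) (t : ℕ) : A t ≤ B t :=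
  hB t ▸ le_sup_left

lemma pow_mul_mem_colon_pow (hA : Antitone A) (x : R) (t p : ℕ) :
    ∀ a ∈ (A (t + p)).colon {x ^ (t + p)}, x ^ p * a ∈ (A t).colon {x ^ t} :=
  mul_mem_colon_of_mem_colon (hA (t.le_add_right p)) (by rw [pow_add, mul_comm])

lemma extRes_extConnecting_pow (hA : Antitone A) (hB : ∀ t, B t = A t ⊔ Ideal.span {x ^ t})
    (t p : ℕ) (hBp : B (t + p) ≤ B t) (f : Ext (ModuleCat.of R (R ⧸ (A t).colon {x ^ t})) M n) :
    extRes hBp (extConnecting (hB t) f) =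
      extConnecting (hB (t + p)) (extPull (x ^ p) (pow_mul_mem_colon_pow hA x t p) f) :=
  extRes_extConnecting (hA (t.le_add_right p)) (by rw [pow_add, mul_comm]) _ _ hBp f

lemma exists_extRes_eq_extConnecting (hA : Antitone A)
    (hB : ∀ t, B t = A t ⊔ Ideal.span {x ^ t}) (vanishes : ExtColimitVanishes A M (n + 1)) (t : ℕ)
    (e : Ext (ModuleCat.of R (R ⧸ B t)) M (n + 1)) :
    ∃ s, ∃ h : t ≤ s, ∃ f,
      extRes (antitone_of_eq_sup_span_pow hA hB h) e = extConnecting (hB s) f := by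
  obtain ⟨s, hs, vanishing⟩ := (extColimitVanishes_iff_of_antitone hA).1 vanishes t
    (extRes (le_of_eq_sup_span_pow hB t) e)
  obtain ⟨f, hf⟩ := exists_extConnecting_eq (hB s) (le_of_eq_sup_span_pow hB s)
    (extRes (antitone_of_eq_sup_span_pow hA hB hs) e) (by
      rw [extRes_extRes] at vanishing ⊢
      exact vanishing)
  exact ⟨s, hs, f, hf.symm⟩

lemma exists_pow_mul_mem_of_pow_mul_mem [IsNoetherianRing R] (I : Ideal R) (x : R) :
    ∃ k, ∀ s a, x ^ s * a ∈ I → x ^ k * a ∈ I := by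
  let colonChain : ℕ →o Ideal R :=
    ⟨fun s => I.colon {x ^ s}, fun s t hst a ha => by
      obtain ⟨p, rfl⟩ := Nat.exists_eq_add_of_le hst
      rw [Submodule.mem_colon_singleton, smul_eq_mul] at ha ⊢
      rw [pow_add, ← mul_assoc]
      exact I.mul_mem_right _ ha⟩
  obtain ⟨k, stable⟩ := monotone_stabilizes_iff_noetherian.2 ‹_› colonChain
  refine ⟨k, fun s a ha => ?_⟩
  have mem_max : a ∈ colonChain (max k s) := colonChain.monotone (le_max_right k s)
    (Submodule.mem_colon_singleton.2 (by rwa [smul_eq_mul, mul_comm]))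
  rw [← stable _ (le_max_left k s)] at mem_max
  exact mul_mem_of_mem_colon_singleton a mem_max

lemma ExtColimitVanishes.succ [IsNoetherianRing R] (hA : Antitone A)
    (hB : ∀ t, B t = A t ⊔ Ideal.span {x ^ t}) (vanishes : ExtColimitVanishes A M n)
    (vanishes_succ : ExtColimitVanishes A M (n + 1)) : ExtColimitVanishes B M (n + 1) := by
  have hB' := antitone_of_eq_sup_span_pow hA hB
  refine (extColimitVanishes_iff_of_antitone hB').2 fun t e => ?_
  obtain ⟨t₁, ht₁, f, hf⟩ := exists_extRes_eq_extConnecting hA hB vanishes_succ t e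
  obtain ⟨t₂, ht₂, f_vanishes⟩ := vanishes t₁ (extRes Ideal.le_colon f)
  obtain ⟨k, hk⟩ := exists_pow_mul_mem_of_pow_mul_mem (A t₂) x
  let s := t₁ + (t₂ + k)
  have pow_mul_mem : ∀ a ∈ (A s).colon {x ^ s}, x ^ (t₂ + k) * a ∈ A t₂ := fun a ha => by
    rw [pow_add, mul_assoc]
    exact Ideal.mul_mem_left _ _ <| hk s a <|
      hA (by omega) (mul_mem_of_mem_colon_singleton a ha)
  refine ⟨s, by omega, ?_⟩
  rw [← extRes_extRes (hB' (by omega : t₁ ≤ s)) (hB' ht₁), hf,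
    extRes_extConnecting_pow hA hB]
  have factorization := congrArg (extPull (x ^ (t₂ + k)) pow_mul_mem) f_vanishes
  rw [extRes_extRes, extPull_extRes, map_zero] at factorization
  rw [factorization, map_zero]

/-- The classes `c t ∈ Extⁿ(R ⧸ J t, R)` behave like the classes of `1 / w ^ t` in the top local
cohomology `R_w / ∑ R_{w / yᵢ}` of `R` with respect to elements `y₁, …, yₙ` with product `w`, where
`J t = (y₁ ^ t, …, yₙ ^ t)`: they generate the direct limit of the groups `Extⁿ(R ⧸ J t, R)`, and
they are killed only by those elements that kill `1 / w ^ t`, up to one factor `w`. -/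
structure IsTopClass {J : ℕ → Ideal R} (hJ : Antitone J) (w : R)
    (c : ∀ t, Ext (ModuleCat.of R (R ⧸ J t)) (ModuleCat.of R R) n) : Prop where
  extRes_eq : ∀ t p, extRes (hJ (t.le_add_right p)) (c t) = w ^ p • c (t + p)
  exists_extRes_eq_smul : ∀ t e, ∃ (p : ℕ) (m : R), extRes (hJ (t.le_add_right p)) e = m • c (t + p)
  exists_mul_mem_of_smul_eq_zero : ∀ t (a : R), a • c t = 0 → ∃ r, w ^ (r + 1) * a ∈ J (t + r)

section Successor

variable {hA : Antitone A} {c : ∀ t, Ext (ModuleCat.of R (R ⧸ A t)) (ModuleCat.of R R) n}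

/-- The classes in `Extⁿ⁺¹(R ⧸ B t, R)`, where `B t = A t + (x ^ t)`, obtained from classes
`c t ∈ Extⁿ(R ⧸ A t, R)` by the connecting homomorphism, when `x` annihilates
`(A t : x ^ t) ⧸ A t`. -/
def topClassSucc (hB : ∀ t, B t = A t ⊔ Ideal.span {x ^ t})
    (hx : ∀ t, ∀ a ∈ (A t).colon {x ^ t}, x * a ∈ A t)
    (c : ∀ t, Ext (ModuleCat.of R (R ⧸ A t)) (ModuleCat.of R R) n) (t : ℕ) :
    Ext (ModuleCat.of R (R ⧸ B t)) (ModuleCat.of R R) (n + 1) :=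
  extConnecting (hB t) (extPull x (hx t) (c t))

lemma IsTopClass.extRes_topClassSucc (hc : IsTopClass hA w c)
    (hB : ∀ t, B t = A t ⊔ Ideal.span {x ^ t}) (hx : ∀ t, ∀ a ∈ (A t).colon {x ^ t}, x * a ∈ A t)
    (t p : ℕ) (hBs : B (t + p) ≤ B t) :
    extRes hBs (topClassSucc hB hx c t) = (w * x) ^ p • topClassSucc hB hx c (t + p) := by
  rw [topClassSucc, extRes_extConnecting_pow hA hB, topClassSucc, ← map_smul]
  congr 1
  rw [mul_pow, mul_comm, mul_smul, ← map_smul _ (w ^ p), ← hc.extRes_eq, extPull_extRes,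
    smul_extPull, extPull_extPull]

lemma IsTopClass.exists_extRes_eq_smul_topClassSucc (hc : IsTopClass hA w c)
    (hB : ∀ t, B t = A t ⊔ Ideal.span {x ^ t}) (hx : ∀ t, ∀ a ∈ (A t).colon {x ^ t}, x * a ∈ A t)
    (vanishes : ExtColimitVanishes A (ModuleCat.of R R) (n + 1)) (t : ℕ)
    (e : Ext (ModuleCat.of R (R ⧸ B t)) (ModuleCat.of R R) (n + 1)) :
    ∃ (p : ℕ) (m : R), extRes (antitone_of_eq_sup_span_pow hA hB (t.le_add_right p)) e =
      m • topClassSucc hB hx c (t + p) := by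
  have hB' := antitone_of_eq_sup_span_pow hA hB
  obtain ⟨t₁, ht₁, f, hf⟩ := exists_extRes_eq_extConnecting hA hB vanishes t e
  obtain ⟨p, m, hm⟩ := hc.exists_extRes_eq_smul t₁ (extRes Ideal.le_colon f)
  suffices ∃ s, ∃ h : t ≤ s, ∃ m : R, extRes (hB' h) e = m • topClassSucc hB hx c s by
    obtain ⟨s, h, m, hm⟩ := this
    obtain ⟨p, rfl⟩ := Nat.exists_eq_add_of_le h
    exact ⟨p, m, hm⟩
  let s := t₁ + (p + 1)
  have res_f : extRes ((hA (by omega : t₁ ≤ s)).trans Ideal.le_colon) f = (m * w) • c s := by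
    rw [← extRes_extRes (hA (by omega : t₁ + p ≤ s)) ((hA (by omega)).trans Ideal.le_colon),
      ← extRes_extRes (hA (by omega)) Ideal.le_colon, hm, map_smul, mul_smul]
    have := hc.extRes_eq (t₁ + p) 1
    rw [pow_one] at this
    exact congrArg (m • ·) this
  have extPull_f : extPull (x ^ (p + 1)) (pow_mul_mem_colon_pow hA x t₁ (p + 1)) f =
      (x ^ p * (m * w)) • extPull x (hx s) (c s) := by
    rw [mul_smul, ← map_smul, ← res_f, extPull_extRes, smul_extPull]
    exact extPull_congr (pow_succ x p) _ f
  refine ⟨s, by omega, x ^ p * (m * w), ?_⟩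
  rw [← extRes_extRes (hB' (t₁.le_add_right (p + 1))) (hB' ht₁), hf,
    extRes_extConnecting_pow hA hB, extPull_f, map_smul, topClassSucc]

lemma IsTopClass.exists_mul_mem_of_smul_topClassSucc_eq_zero (hc : IsTopClass hA w c)
    (hB : ∀ t, B t = A t ⊔ Ideal.span {x ^ t}) (hx : ∀ t, ∀ a ∈ (A t).colon {x ^ t}, x * a ∈ A t)
    (t : ℕ) (a : R) (ha : a • topClassSucc hB hx c t = 0) :
    ∃ r, (w * x) ^ (r + 1) * a ∈ B (t + r) := by
  rw [topClassSucc, ← map_smul] at ha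
  obtain ⟨g, hg⟩ := exists_extPull_eq_of_extConnecting_eq_zero (hB t) _ ha
  obtain ⟨p, m, hm⟩ := hc.exists_extRes_eq_smul t g
  have hA_colon : A (t + p) ≤ (A t).colon {x ^ t} := (hA (t.le_add_right p)).trans Ideal.le_colon
  have res_left : extRes hA_colon (extPull (x ^ t) mul_mem_of_mem_colon_singleton g) =
      (x ^ t * m) • c (t + p) := by
    rw [mul_smul, ← hm, extRes_extPull, extRes, smul_extPull]
    exact extPull_congr (mul_one _).symm _ g
  have res_right : extRes hA_colon (a • extPull x (hx t) (c t)) = (a * x * w ^ p) • c (t + p) := by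
    rw [map_smul, mul_smul, mul_smul, ← hc.extRes_eq, extRes_extPull, extRes, smul_extPull x]
    exact congrArg (a • ·) (extPull_congr (mul_one _).symm _ (c t))
  obtain ⟨r, hr⟩ := hc.exists_mul_mem_of_smul_eq_zero (t + p) (x ^ t * m - a * x * w ^ p) (by
    rw [sub_smul, ← res_left, ← res_right, hg, sub_self])
  refine ⟨p + r, ?_⟩
  rw [hB, ← add_assoc, show (w * x) ^ (p + r + 1) * a =
    w ^ (r + 1) * m * x ^ (p + r) * x ^ t -
      x ^ (p + r) * (w ^ (r + 1) * (x ^ t * m - a * x * w ^ p)) by ring]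
  refine sub_mem (Ideal.mem_sup_right ?_) (Ideal.mem_sup_left (Ideal.mul_mem_left _ _ hr))
  exact Ideal.mem_span_singleton.2 ⟨w ^ (r + 1) * m, by ring⟩

lemma IsTopClass.succ (hc : IsTopClass hA w c) (hB : ∀ t, B t = A t ⊔ Ideal.span {x ^ t})
    (hx : ∀ t, ∀ a ∈ (A t).colon {x ^ t}, x * a ∈ A t)
    (vanishes : ExtColimitVanishes A (ModuleCat.of R R) (n + 1)) :
    IsTopClass (antitone_of_eq_sup_span_pow hA hB) (w * x) (topClassSucc hB hx c) where
  extRes_eq t p := hc.extRes_topClassSucc hB hx t p _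
  exists_extRes_eq_smul := hc.exists_extRes_eq_smul_topClassSucc hB hx vanishes
  exists_mul_mem_of_smul_eq_zero := hc.exists_mul_mem_of_smul_topClassSucc_eq_zero hB hx

end Successor

lemma IsTopClass.not_extColimitVanishes {J : ℕ → Ideal R} {hJ : Antitone J}
    {c : ∀ t, Ext (ModuleCat.of R (R ⧸ J t)) (ModuleCat.of R R) n} (hc : IsTopClass hJ w c) {k : ℕ}
    (hw : ∀ t, w ^ t ∉ J (t + k)) :
    ¬ ExtColimitVanishes J (ModuleCat.of R R) n := fun vanishes => by
  obtain ⟨s, hs, vanishing⟩ :=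
    (extColimitVanishes_iff_of_antitone hJ).1 vanishes (k + 1) (c (k + 1))
  obtain ⟨p, rfl⟩ := Nat.exists_eq_add_of_le hs
  rw [hc.extRes_eq] at vanishing
  obtain ⟨r, hr⟩ := hc.exists_mul_mem_of_smul_eq_zero _ _ vanishing
  refine hw (p + r + 1) ?_
  convert hr using 1 <;> ring_nf

end IdealTower

section PowIdeal

open Abelian

universe u

variable {R : Type u} [CommRing R] {ι : Type*}

/-- The ideal generated by the powers `y i ^ t` with `i ∈ S`. -/
def powIdeal (y : ι → R) (S : Finset ι) (t : ℕ) : Ideal R :=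
  Ideal.span ((fun i => y i ^ t) '' (S : Set ι))

lemma powIdeal_empty (y : ι → R) : powIdeal y ∅ = fun _ => ⊥ := by
  ext1
  rw [powIdeal, Finset.coe_empty, Set.image_empty, Ideal.span_empty]

lemma powIdeal_insert [DecidableEq ι] (y : ι → R) (S : Finset ι) (j : ι) (t : ℕ) :
    powIdeal y (insert j S) t = powIdeal y S t ⊔ Ideal.span {y j ^ t} := by
  rw [powIdeal, Finset.coe_insert, Set.image_insert_eq, Ideal.span_insert, sup_comm, powIdeal]

lemma antitone_powIdeal (y : ι → R) (S : Finset ι) : Antitone (powIdeal y S) := by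
  rintro s t hst
  refine Ideal.span_le.2 ?_
  rintro _ ⟨i, hi, rfl⟩
  exact Ideal.mem_of_dvd _ (pow_dvd_pow (y i) hst) (Ideal.subset_span ⟨i, hi, rfl⟩)

lemma powIdeal_le_pow (y : ι → R) (S : Finset ι) (t : ℕ) :
    powIdeal y S t ≤ Ideal.span (y '' S) ^ t := by
  refine Ideal.span_le.2 ?_
  rintro _ ⟨i, hi, rfl⟩
  have mem_span : y i ∈ Ideal.span (y '' S) := Ideal.subset_span ⟨i, hi, rfl⟩
  exact Ideal.pow_mem_pow mem_span t

lemma exists_pow_le_powIdeal (y : ι → R) (S : Finset ι) (t : ℕ) :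
    ∃ s, Ideal.span (y '' S) ^ s ≤ powIdeal y S t := by
  refine Ideal.exists_pow_le_of_le_radical_of_fg (Ideal.span_le.2 ?_)
    (Submodule.fg_span (S.finite_toSet.image y))
  rintro _ ⟨i, hi, rfl⟩
  exact ⟨t, Ideal.subset_span ⟨i, hi, rfl⟩⟩

lemma subsingleton_localCohomology_span_iff (y : ι → R) (S : Finset ι) (M : ModuleCat.{u} R)
    (n : ℕ) : Subsingleton ((localCohomology (Ideal.span (y '' S)) n).obj M) ↔
      ExtColimitVanishes (powIdeal y S) M n := by
  rw [subsingleton_localCohomology_iff]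
  have le_pow t : ∃ s, powIdeal y S s ≤ Ideal.span (y '' S) ^ t := ⟨t, powIdeal_le_pow y S t⟩
  have pow_le := exists_pow_le_powIdeal y S
  exact ⟨fun h => h.of_cofinal pow_le le_pow, fun h => h.of_cofinal le_pow pow_le⟩

/-- The isomorphism `R ⧸ 0 ≅ R`. -/
def quotBotIso : ModuleCat.of R (R ⧸ (⊥ : Ideal R)) ≅ ModuleCat.of R R :=
  (Submodule.quotEquivOfEqBot ⊥ rfl).toModuleIso

lemma extColimitVanishes_bot (M : ModuleCat.{u} R) {n : ℕ} (hn : 0 < n) :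
    ExtColimitVanishes (fun _ => ⊥) M n := fun t α => by
  have : Projective (ModuleCat.of R (R ⧸ (⊥ : Ideal R))) :=
    Projective.of_iso quotBotIso.symm <| (IsProjective.iff_projective _).1 inferInstance
  obtain ⟨m, rfl⟩ := Nat.exists_eq_succ_of_ne_zero hn.ne'
  exact ⟨t, le_rfl, by rw [α.eq_zero_of_projective, map_zero]⟩

lemma isTopClass_bot :
    IsTopClass (antitone_const : Antitone fun _ => (⊥ : Ideal R)) 1
      fun _ => Ext.mk₀ (quotBotIso (R := R)).hom where
  extRes_eq t p := by
    rw [one_pow, one_smul]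
    exact extRes_self _
  exists_extRes_eq_smul t e := by
    obtain ⟨f, rfl⟩ := (Ext.mk₀_bijective _ _).2 e
    refine ⟨0, f (Ideal.Quotient.mk ⊥ 1), ?_⟩
    rw [← Ext.mk₀_smul]
    refine (extRes_self _).trans (congrArg Ext.mk₀ (cyclicHom_ext ?_))
    exact (mul_one (f (Ideal.Quotient.mk ⊥ 1))).symm
  exists_mul_mem_of_smul_eq_zero _ a ha := by
    rw [← Ext.mk₀_smul, Ext.mk₀_eq_zero_iff] at ha
    have : a * 1 = 0 := congrArg (fun f => f.hom (Ideal.Quotient.mk ⊥ 1)) ha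
    exact ⟨0, by rw [one_pow, mul_comm, this]; exact zero_mem _⟩

theorem extColimitVanishes_powIdeal [IsNoetherianRing R] (y : ι → R) (S : Finset ι)
    (M : ModuleCat.{u} R) {n : ℕ} (hn : S.card < n) : ExtColimitVanishes (powIdeal y S) M n := by
  classical
  induction S using Finset.induction_on generalizing n with
  | empty =>
    rw [powIdeal_empty]
    exact extColimitVanishes_bot M hn
  | insert j S hj ih =>
    rw [Finset.card_insert_of_notMem hj] at hn
    obtain ⟨m, rfl⟩ := Nat.exists_eq_succ_of_ne_zero (Nat.ne_zero_of_lt hn)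
    exact .succ (antitone_powIdeal y S) (powIdeal_insert y S j) (ih (by omega)) (ih (by omega))

theorem subsingleton_localCohomology_span [IsNoetherianRing R] (y : ι → R) (S : Finset ι)
    (M : ModuleCat.{u} R) {n : ℕ} (hn : S.card < n) :
    Subsingleton ((localCohomology (Ideal.span (y '' S)) n).obj M) :=
  (subsingleton_localCohomology_span_iff y S M n).2 (extColimitVanishes_powIdeal y S M hn)

/-- For any finitely many of the elements `y i` and any other one `y j`, multiplication by `y j`
annihilates `((yᵢ ^ t)ᵢ : yⱼ ^ t) ⧸ (yᵢ ^ t)ᵢ`. -/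
def WeakOnPowers (y : ι → R) : Prop :=
  ∀ S : Finset ι, ∀ j ∉ S, ∀ t, ∀ a ∈ (powIdeal y S t).colon {y j ^ t}, y j * a ∈ powIdeal y S t

theorem WeakOnPowers.exists_isTopClass [IsNoetherianRing R] {y : ι → R} (hy : WeakOnPowers y)
    (S : Finset ι) :
    ∃ c : ∀ t, Ext (ModuleCat.of R (R ⧸ powIdeal y S t)) (ModuleCat.of R R) S.card,
      IsTopClass (antitone_powIdeal y S) (∏ i ∈ S, y i) c := by
  classical
  induction S using Finset.induction_on with
  | empty =>
    have of_eq_bot : ∀ {J : ℕ → Ideal R} (hJ : Antitone J), J = (fun _ => ⊥) →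
        ∃ c : ∀ t, Ext (ModuleCat.of R (R ⧸ J t)) (ModuleCat.of R R) 0, IsTopClass hJ 1 c := by
      rintro _ _ rfl
      exact ⟨_, isTopClass_bot⟩
    exact of_eq_bot (antitone_powIdeal y ∅) (powIdeal_empty y)
  | insert j S hj ih =>
    obtain ⟨c, hc⟩ := ih
    rw [Finset.card_insert_of_notMem hj, Finset.prod_insert hj, mul_comm]
    exact ⟨_, hc.succ (powIdeal_insert y S j) (hy S j hj)
      (extColimitVanishes_powIdeal y S _ (Nat.lt_succ_self _))⟩

theorem WeakOnPowers.nontrivial_localCohomology [IsNoetherianRing R] {y : ι → R}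
    (hy : WeakOnPowers y) {S : Finset ι} {k : ℕ}
    (hS : ∀ t, (∏ i ∈ S, y i) ^ t ∉ powIdeal y S (t + k)) :
    Nontrivial ((localCohomology (Ideal.span (y '' S)) S.card).obj (ModuleCat.of R R)) := by
  rw [← not_subsingleton_iff_nontrivial, subsingleton_localCohomology_span_iff]
  obtain ⟨c, hc⟩ := hy.exists_isTopClass S
  exact hc.not_extColimitVanishes hS

end PowIdeal

section WeakSequences

variable {J : Ideal R} {d : ℕ} {y : Fin d → R}

lemma mem_pSpan_self_iff {r : ℕ} {x : Fin r → R} {i : Fin r} {a : R} :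
    a ∈ pSpan R x i ↔ a ∈ Ideal.span (x '' Set.Iio i) := by
  rw [pSpan, smul_eq_mul, Ideal.mul_top]
  rfl

lemma IsWeakSeq.mono {I : Ideal R} {M : Type} [AddCommGroup M] [Module R M] {r : ℕ}
    {x : Fin r → R} (hx : IsWeakSeq J M x) (hIJ : I ≤ J) : IsWeakSeq I M x :=
  fun i m hm a ha => hx i m hm a (hIJ ha)

lemma IsWeakSeq.comp_castLE {r k : ℕ} {x : Fin r → R} (hx : IsWeakSeq J R x) (hk : k ≤ r) :
    IsWeakSeq J R (x ∘ Fin.castLE hk) := fun i c hc a ha => by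
  have image_Iio : (x ∘ Fin.castLE hk) '' Set.Iio i = x '' Set.Iio (Fin.castLE hk i) := by
    rw [Set.image_comp, Fin.image_castLE_Iio]
  rw [mem_pSpan_self_iff, image_Iio, ← mem_pSpan_self_iff] at hc ⊢
  exact hx _ c hc a ha

lemma IsUncondWeakSeq.isWeakSeq_comp (hy : IsUncondWeakSeq J R y) {k : ℕ} (e : Fin k ↪ Fin d)
    {α : Fin d → ℕ} (hα : ∀ i, 0 < α i) : IsWeakSeq J R ((fun i => y i ^ α i) ∘ e) := by
  have hk : k ≤ d := by simpa only [Fintype.card_fin] using Fintype.card_le_of_embedding e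
  obtain ⟨σ, hσ⟩ := Equiv.Perm.exists_extending_pair (Fin.castLE hk) e
    (Fin.castLE_injective hk) e.injective
  have : (fun i => y i ^ α i) ∘ e = (fun i => y (σ i) ^ α (σ i)) ∘ Fin.castLE hk :=
    funext fun i => by simp only [Function.comp_apply, hσ]
  rw [this]
  exact (hy σ (α ∘ σ) fun i => hα (σ i)).comp_castLE hk

lemma exists_embedding_image_Iio_last {ι : Type*} [LinearOrder ι] {T : Finset ι} {j : ι}
    (hj : j ∉ T) :
    ∃ e : Fin (T.card + 1) ↪ ι, e '' Set.Iio (Fin.last _) = T ∧ e (Fin.last _) = j := by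
  let enum := T.orderEmbOfFin rfl
  have range_enum : Set.range enum = T := T.range_orderEmbOfFin rfl
  have hj' : j ∉ Set.range enum := by rwa [range_enum]
  have range_castSucc : Set.Iio (Fin.last _) = Set.range (Fin.castSucc : Fin T.card → _) :=
    Fin.range_castSucc.symm
  refine ⟨Fin.Embedding.snoc enum.toEmbedding hj', ?_, ?_⟩
  · rw [range_castSucc, ← Set.range_comp, ← range_enum]
    exact congrArg Set.range (funext fun i => Fin.Embedding.snoc_castSucc)
  · rw [Fin.Embedding.coe_snoc, Fin.snoc_last]

lemma IsUncondWeakSeq.mul_mem_span (hy : IsUncondWeakSeq J R y) {α : Fin d → ℕ}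
    (hα : ∀ i, 0 < α i) {T : Finset (Fin d)} {j : Fin d} (hj : j ∉ T) {c : R}
    (hc : y j ^ α j * c ∈ Ideal.span ((fun i => y i ^ α i) '' T)) {a : R} (ha : a ∈ J) :
    a * c ∈ Ideal.span ((fun i => y i ^ α i) '' T) := by
  obtain ⟨e, image_Iio, rfl⟩ := exists_embedding_image_Iio_last hj
  have pSpan_iff (r : R) : r ∈ pSpan R ((fun i => y i ^ α i) ∘ e) (Fin.last _) ↔
      r ∈ Ideal.span ((fun i => y i ^ α i) '' T) := by
    rw [mem_pSpan_self_iff, Set.image_comp, image_Iio]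
  exact (pSpan_iff _).1 (hy.isWeakSeq_comp e hα _ c ((pSpan_iff _).2 hc) a ha)

lemma IsUncondWeakSeq.weakOnPowers (hy : IsUncondWeakSeq J R y) (hyJ : ∀ i, y i ∈ J) :
    WeakOnPowers y := fun S j hj t a ha => by
  have ha := mul_mem_of_mem_colon_singleton a ha
  rcases t.eq_zero_or_pos with rfl | ht
  · rw [pow_zero, one_mul] at ha
    exact Ideal.mul_mem_left _ _ ha
  · exact hy.mul_mem_span (fun _ => ht) hj ha (hyJ j)

lemma image_compl_singleton_update {ι A : Type*} [DecidableEq ι] [Monoid A] (y : ι → A)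
    (α : ι → ℕ) (j : ι) (a : ℕ) :
    (fun i => y i ^ Function.update α j a i) '' {j}ᶜ = (fun i => y i ^ α i) '' {j}ᶜ :=
  Set.image_congr fun i hi => by rw [Function.update_of_ne hi]

lemma IsUncondWeakSeq.mul_mem_span_image_compl {J : Ideal R} (weak : IsUncondWeakSeq J R y)
    {α : Fin d → ℕ} (hα : ∀ i, 0 < α i) {j : Fin d} {a : ℕ} (ha : 0 < a) {c : R}
    (hc : y j ^ a * c ∈ Ideal.span ((fun i => y i ^ α i) '' {j}ᶜ)) {b : R} (hb : b ∈ J) :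
    b * c ∈ Ideal.span ((fun i => y i ^ α i) '' {j}ᶜ) := by
  have update_pos : ∀ i, 0 < Function.update α j a i :=
    (Function.forall_update_iff α fun _ e => 0 < e).2 ⟨ha, fun i _ => hα i⟩
  have := weak.mul_mem_span update_pos (T := {j}ᶜ) (j := j) (c := c) (by simp)
  rw [Finset.coe_compl, Finset.coe_singleton, image_compl_singleton_update,
    Function.update_self] at this
  exact this hc hb

end WeakSequences

lemma radical_add_annihilator_self {R : Type*} [CommRing R] (I : Ideal R) :
    (I + Module.annihilator R R).radical = I.radical := by
  rw [Module.annihilator_eq_bot.2 inferInstance, Submodule.add_eq_sup, sup_bot_eq]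

section SystemsOfParameters

open IsLocalRing

universe u

variable {R : Type u} [CommRing R] [IsLocalRing R] {d : ℕ} {y : Fin d → R}

lemma mem_maximalIdeal_of_radical_span_eq (hy : (Ideal.span (Set.range y)).radical = maximalIdeal R)
    (i : Fin d) : y i ∈ maximalIdeal R :=
  hy ▸ Ideal.le_radical (Ideal.subset_span ⟨i, rfl⟩)

lemma le_ncard_of_radical_span_eq_maximalIdeal [IsNoetherianRing R] (hd : ringKrullDim R = d)
    {s : Set R} (hs : s.Finite) (h : (Ideal.span s).radical = maximalIdeal R) : d ≤ s.ncard := by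
  have mem_minimalPrimes : maximalIdeal R ∈ (Ideal.span s).minimalPrimes := by
    rw [← Ideal.radical_minimalPrimes, h, Ideal.minimalPrimes_eq_subsingleton_self]
    rfl
  have height_eq : (maximalIdeal R).height = (d : ℕ∞) :=
    WithBot.coe_injective (maximalIdeal_height_eq_ringKrullDim.trans hd)
  have height_le := Ideal.height_le_card_of_mem_minimalPrimes_span hs mem_minimalPrimes
  rw [height_eq] at height_le
  exact_mod_cast height_le

lemma radical_span_union_image_compl (hy : (Ideal.span (Set.range y)).radical = maximalIdeal R)
    (S : Set (Fin d)) {s : Set R} (h : (Ideal.span s).radical = (Ideal.span (y '' S)).radical) :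
    (Ideal.span (s ∪ y '' Sᶜ)).radical = maximalIdeal R := by
  rw [Ideal.span_union, Ideal.radical_sup, h, ← Ideal.radical_sup, ← Ideal.span_union,
    ← Set.image_union, Set.union_compl_self, Set.image_univ, hy]

lemma card_le_of_radical_span_eq [IsNoetherianRing R] (hd : ringKrullDim R = d)
    (hy : (Ideal.span (Set.range y)).radical = maximalIdeal R) (S : Finset (Fin d)) {k : ℕ}
    {x : Fin k → R}
    (h : (Ideal.span (Set.range x)).radical = (Ideal.span (y '' S)).radical) : S.card ≤ k := by
  have d_le := le_ncard_of_radical_span_eq_maximalIdeal hd (Set.toFinite _)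
    (radical_span_union_image_compl hy S h)
  have ncard_range_le : (Set.range x).ncard ≤ k := by
    simpa only [Set.image_univ, Set.ncard_univ, Nat.card_fin] using
      Set.ncard_image_le (f := x) Set.finite_univ
  have ncard_image_le : (y '' (Sᶜ : Set (Fin d))).ncard ≤ d - S.card := by
    simpa only [← Finset.coe_compl, Set.ncard_coe_finset, Finset.card_compl, Fintype.card_fin] using
      Set.ncard_image_le (f := y) (Set.toFinite (Sᶜ : Set (Fin d)))
  have S_card_le : S.card ≤ d := card_finset_fin_le S
  have union_le := Set.ncard_union_le (Set.range x) (y '' (Sᶜ : Set (Fin d)))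
  omega

lemma notMem_radical_span_image_compl [IsNoetherianRing R] (hd : ringKrullDim R = d)
    (hy : (Ideal.span (Set.range y)).radical = maximalIdeal R) (j : Fin d) :
    y j ∉ (Ideal.span (y '' {j}ᶜ)).radical := fun hj => by
  have radical_eq : (Ideal.span (y '' {j}ᶜ)).radical = maximalIdeal R := by
    rw [← hy]
    refine le_antisymm (Ideal.radical_mono (Ideal.span_mono (Set.image_subset_range ..))) ?_
    refine Ideal.radical_le_radical_iff.2 (Ideal.span_le.2 ?_)
    rintro _ ⟨i, rfl⟩
    by_cases hi : i = j
    · exact hi ▸ hj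
    · exact Ideal.le_radical (Ideal.subset_span ⟨i, hi, rfl⟩)
  have d_le := le_ncard_of_radical_span_eq_maximalIdeal hd (Set.toFinite _) radical_eq
  have ncard_le := Set.ncard_image_le (f := y) (Set.toFinite {j}ᶜ)
  rw [Set.ncard_compl, Set.ncard_singleton, Nat.card_fin] at ncard_le
  have := j.pos
  omega

lemma exists_sub_mul_mem_span_image_compl {A ι : Type*} [CommRing A] (f : ι → A) (j : ι) {b : A}
    (hb : b ∈ Ideal.span (Set.range f)) : ∃ r, b - r * f j ∈ Ideal.span (f '' {j}ᶜ) := by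
  rw [← Set.image_univ, ← Set.union_compl_self {j}, Set.image_union, Set.image_singleton,
    Set.singleton_union, Ideal.mem_span_insert] at hb
  obtain ⟨r, c, hc, rfl⟩ := hb
  exact ⟨r, by rwa [add_sub_cancel_left]⟩

lemma pow_notMem_span_range_pow [IsNoetherianRing R] (hd : ringKrullDim R = d)
    (hy : (Ideal.span (Set.range y)).radical = maximalIdeal R) {α : Fin d → ℕ} (hα : ∀ i, 0 < α i)
    {j : Fin d} {a : ℕ} (ha : a < α j) : y j ^ a ∉ Ideal.span (Set.range fun i => y i ^ α i) := by
  intro pow_mem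
  obtain ⟨r, hr⟩ := exists_sub_mul_mem_span_image_compl _ j pow_mem
  obtain ⟨p, hp⟩ := Nat.exists_eq_add_of_lt ha
  have isUnit : IsUnit (1 - r * y j ^ (p + 1)) := by
    refine isUnit_one_sub_self_of_mem_nonunits _ ((maximalIdeal R).mul_mem_left r ?_)
    exact Ideal.pow_mem_of_mem _ (mem_maximalIdeal_of_radical_span_eq hy j) _ p.succ_pos
  have factorization : y j ^ a - r * y j ^ α j = y j ^ a * (1 - r * y j ^ (p + 1)) := by
    rw [hp]
    ring
  rw [factorization, Ideal.mul_unit_mem_iff_mem _ isUnit] at hr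
  refine notMem_radical_span_image_compl hd hy j ⟨a, (Ideal.span_le.2 ?_ : _ ≤ _) hr⟩
  rintro _ ⟨i, hi, rfl⟩
  have mem_span : y i ∈ Ideal.span (y '' {j}ᶜ) := Ideal.subset_span ⟨i, hi, rfl⟩
  exact Ideal.pow_mem_of_mem _ mem_span _ (hα i)

end SystemsOfParameters

section Buchsbaum

open IsLocalRing

variable {R : Type} [CommRing R] [IsLocalRing R] {d : ℕ} {y : Fin d → R}

theorem IsUncondWeakSeq.prod_pow_notMem_span [IsNoetherianRing R] (hd : ringKrullDim R = d)
    (hy : (Ideal.span (Set.range y)).radical = maximalIdeal R)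
    (weak : IsUncondWeakSeq (maximalIdeal R) R y) {S : Finset (Fin d)} (hS : S.Nonempty) {a : ℕ}
    (ha : 0 < a) {α : Fin d → ℕ} (hα : ∀ i, 0 < α i) (hαS : ∀ i ∈ S, a + S.card ≤ α i) :
    (∏ i ∈ S, y i) ^ a ∉ Ideal.span (Set.range fun i => y i ^ α i) := by
  induction hS using Finset.Nonempty.cons_induction generalizing a α with
  | singleton j =>
    rw [Finset.prod_singleton]
    exact pow_notMem_span_range_pow hd hy hα (hαS j (Finset.mem_singleton_self j))
  | cons j S hj hS ih =>
    rw [Finset.card_cons] at hαS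
    rw [Finset.prod_cons]
    intro prod_mem
    set w := ∏ i ∈ S, y i
    have w_mem : w ∈ maximalIdeal R := by
      obtain ⟨i, hi⟩ := hS
      exact Ideal.mem_of_dvd _ (Finset.dvd_prod_of_mem y hi)
        (mem_maximalIdeal_of_radical_span_eq hy i)
    obtain ⟨p, hp⟩ : ∃ p, α j = a + (p + 1) := by
      have := hαS j (Finset.mem_cons_self j S)
      exact ⟨α j - a - 1, by omega⟩
    obtain ⟨r, hr⟩ := exists_sub_mul_mem_span_image_compl _ j prod_mem
    have mul_sub_mem : w * (w ^ a - r * y j ^ (p + 1)) ∈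
        Ideal.span ((fun i => y i ^ α i) '' {j}ᶜ) :=
      weak.mul_mem_span_image_compl hα ha (by convert hr using 1; rw [hp]; ring) w_mem
    have image_subset := Set.image_subset_range
      (fun i => y i ^ Function.update α j (p + 1) i) {j}ᶜ
    rw [image_compl_singleton_update] at image_subset
    have y_pow_mem : y j ^ (p + 1) ∈
        Ideal.span (Set.range fun i => y i ^ Function.update α j (p + 1) i) :=
      Ideal.subset_span ⟨j, by simp only [Function.update_self]⟩
    refine ih a.succ_pos (α := Function.update α j (p + 1)) ?_ ?_ ?_
    · exact (Function.forall_update_iff α fun _ e => 0 < e).2 ⟨p.succ_pos, fun i _ => hα i⟩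
    · intro i hi
      rw [Function.update_of_ne (by rintro rfl; exact hj hi)]
      have := hαS i (Finset.mem_cons_of_mem hi)
      omega
    · have decomposition : w ^ (a + 1) =
          w * (w ^ a - r * y j ^ (p + 1)) + w * r * y j ^ (p + 1) := by ring
      rw [decomposition]
      exact add_mem (Ideal.span_mono image_subset mul_sub_mem) (Ideal.mul_mem_left _ _ y_pow_mem)

theorem IsUncondWeakSeq.prod_pow_notMem_powIdeal [IsNoetherianRing R] (hd : ringKrullDim R = d)
    (hy : (Ideal.span (Set.range y)).radical = maximalIdeal R)
    (weak : IsUncondWeakSeq (maximalIdeal R) R y) (S : Finset (Fin d)) (t : ℕ) :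
    (∏ i ∈ S, y i) ^ t ∉ powIdeal y S (t + (S.card + 1)) := by
  intro prod_mem
  rcases S.eq_empty_or_nonempty with rfl | hS
  · rw [Finset.prod_empty, one_pow, powIdeal_empty, Ideal.mem_bot] at prod_mem
    exact one_ne_zero prod_mem
  · refine weak.prod_pow_notMem_span hd hy hS t.succ_pos (α := fun _ => t + (S.card + 1))
      (fun _ => by omega) (fun _ _ => by omega) ?_
    rw [pow_succ]
    exact Ideal.mul_mem_right _ _ (Ideal.span_mono (Set.image_subset_range ..) prod_mem)

theorem IsUncondWeakSeq.isCd_span [IsNoetherianRing R] (hd : ringKrullDim R = d)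
    (hy : (Ideal.span (Set.range y)).radical = maximalIdeal R)
    (weak : IsUncondWeakSeq (maximalIdeal R) R y) (S : Finset (Fin d)) :
    IsCd (Ideal.span (y '' S)) R S.card :=
  ⟨(weak.weakOnPowers (mem_maximalIdeal_of_radical_span_eq hy)).nontrivial_localCohomology
    (weak.prod_pow_notMem_powIdeal hd hy S),
    fun _ hi => subsingleton_localCohomology_span y S (ModuleCat.of R R) hi⟩

theorem isAra_span [IsNoetherianRing R] (hd : ringKrullDim R = d)
    (hy : (Ideal.span (Set.range y)).radical = maximalIdeal R) (S : Finset (Fin d)) :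
    IsAra (Ideal.span (y '' S)) R S.card := by
  simp only [IsAra, radical_add_annihilator_self]
  refine ⟨⟨y ∘ S.orderEmbOfFin rfl, ?_⟩, fun k ⟨x, hx⟩ => card_le_of_radical_span_eq hd hy S hx⟩
  rw [Set.range_comp, Finset.range_orderEmbOfFin]

lemma IsRsop.exists_extension {S : Finset (Fin d)}
    (hy : (Ideal.span (Set.range y)).radical = maximalIdeal R) {x : Fin S.card → R}
    (hx : IsRsop (Ideal.span (y '' S)) R x) :
    ∃ (z : Fin d → R) (e : Fin S.card ↪ Fin d),
      (Ideal.span (Set.range z)).radical = maximalIdeal R ∧ x = z ∘ e := by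
  have radical_eq := hx.2
  rw [radical_add_annihilator_self, radical_add_annihilator_self] at radical_eq
  let e := S.orderEmbOfFin rfl
  have range_e : Set.range e = S := S.range_orderEmbOfFin rfl
  refine ⟨Function.extend e x y, e.toEmbedding, ?_, (Function.extend_comp e.injective x y).symm⟩
  rw [Set.range_extend e.injective, range_e]
  exact radical_span_union_image_compl hy S radical_eq

end Buchsbaum

/-- **Corollary 4.4.** Let `(R, m)` be a Buchsbaum Noetherian local ring (i.e. every system
of parameters of `R` is an unconditioned `m`-weak sequence on `R`) and let `I` be an ideal of
`R` generated by a part `y₁, …, yₙ` of a system of parameters of `R`. Then `R` is an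
`I`-relative Buchsbaum `R`-module; in particular `cd(I,R) = n = ara(I,R)`. -/
theorem corollary_4_4 [IsNoetherianRing R] [IsLocalRing R]
    (d : ℕ) (hd : ringKrullDim R = d)
    (hBuchsbaum : ∀ y : Fin d → R,
      (∀ j, y j ∈ IsLocalRing.maximalIdeal R) →
      (Ideal.span (Set.range y)).radical = IsLocalRing.maximalIdeal R →
      IsUncondWeakSeq (IsLocalRing.maximalIdeal R) R y)
    (y : Fin d → R) (hy1 : ∀ j, y j ∈ IsLocalRing.maximalIdeal R)
    (hy2 : (Ideal.span (Set.range y)).radical = IsLocalRing.maximalIdeal R)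
    (n : ℕ) (hn : n ≤ d)
    (I : Ideal R) (hI : I = Ideal.span (y '' {j : Fin d | (j : ℕ) < n})) :
    IsRelBuchsbaum I R ∧ IsCd I R n ∧ IsAra I R n := by
  obtain ⟨S, rfl, hS⟩ : ∃ S : Finset (Fin d),
      S.card = n ∧ (S : Set (Fin d)) = {j : Fin d | (j : ℕ) < n} :=
    ⟨({j | (j : ℕ) < n} : Finset (Fin d)), by rw [Fin.card_filter_val_lt, min_eq_right hn], by simp⟩
  rw [← hS] at hI
  subst hI
  have cd_eq := (hBuchsbaum y hy1 hy2).isCd_span hd hy2 S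
  have ara_eq := isAra_span hd hy2 S
  refine ⟨⟨S.card, cd_eq, ara_eq, fun x hx => ?_⟩, cd_eq, ara_eq⟩
  obtain ⟨z, e, hz, rfl⟩ := hx.exists_extension hy2
  have z_mem := mem_maximalIdeal_of_radical_span_eq hz
  have span_le : Ideal.span (y '' S) ≤ IsLocalRing.maximalIdeal R :=
    Ideal.span_le.2 (by rintro _ ⟨i, -, rfl⟩; exact hy1 i)
  have weak := (hBuchsbaum z z_mem hz).isWeakSeq_comp e (α := 1) (fun _ => one_pos)
  simp only [Pi.one_apply, pow_one] at weak
  exact weak.mono span_le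
end
end

section
/- Let n be a natural number and x_1,...,x_n ∈ a. If a · Γ_{⟨x_{k+1}⟩}(M/⟨x_1,...,x_k⟩M) = 0 for all 0 ≤ k ≤ n-1, then x_1,...,x_n is both an a-weak sequence on M and a d-sequence on M. -/
/-!
Formalization of a statement from "A theory of relative generalized Cohen-Macaulay modules"
by Divaani-Aazar, Ghanbari Doust, Tousi and Zakeri.

Throughout, `R` is a commutative Noetherian ring and `M` a finitely generated `R`-module.
Conventions used below:
* `locH I i M` is the local cohomology module `H^i_I(M)` (Mathlib's `localCohomology`).
* Conditions `cd(I,M) = c`, `ara(I,M) = n`, `f_I(M) = f`, `grade(I,M) = r` are expressed by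
  the predicates `IsCd`, `IsAra`, `IsFinDim`, `IsGrade`.
* Sequences are given as functions `Fin r → R`; `pSpan M x i = ⟨x_0,…,x_{i-1}⟩M`.
* Koszul (co)homology is defined via the explicit (co)chain complex on the `p`-element
  subsets of `{0,…,n-1}`, and the canonical map `λ^i` into local cohomology is the structure
  map (at exponent 1) into the direct limit of Koszul cohomologies of powers of the sequence,
  which is the realization of `H^i_{⟨x⟩}(M)` used in the paper (2.1(iv)).
-/

open CategoryTheory

noncomputable section

variable {R : Type} [CommRing R]

/-!
Write `N i = ⟨x_j | j < i⟩M`. If `a² • u ∈ N` forces `a • u ∈ N`, then `(N :_M a)` meets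
`N + aM` only in `N`. Applied successively along the chain `N i ≤ ⋯ ≤ N j`, this gives
`(N i :_M I) ∩ N j = N i`. If now `x i * x j` multiplies `m` into `N i`, then `x j • m` lies in
`(N i :_M I)` by the weak sequence property and in `N j` because `x j ^ 2 • m ∈ N j`; hence it
lies in `N i`.
-/

theorem mem_of_smul_mem_of_mem_sup {A E : Type*} [CommRing A] [AddCommGroup E] [Module A E]
    {N : Submodule A E} {a : A} (hsq : ∀ u : E, a ^ 2 • u ∈ N → a • u ∈ N) {m : E}
    (ham : a • m ∈ N) (hm : m ∈ N ⊔ Ideal.span {a} • ⊤) : m ∈ N := by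
  rw [Submodule.ideal_span_singleton_smul, Submodule.mem_sup] at hm
  obtain ⟨p, hp, q, hq, rfl⟩ := hm
  obtain ⟨u, -, rfl⟩ := (Submodule.mem_smul_pointwise_iff_exists _ _ _).1 hq
  have ha2u : a ^ 2 • u ∈ N := by
    rwa [smul_add, N.add_mem_iff_right (N.smul_mem a hp), smul_smul, ← sq] at ham
  exact N.add_mem hp (hsq u ha2u)

section PrefixSpan

variable {M : Type} [AddCommGroup M] [Module R M] {n : ℕ} {x : Fin n → R}

theorem pSpan_mono : Monotone (pSpan M x) := fun _ _ hij =>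
  Submodule.smul_mono_left (Ideal.span_mono (Set.image_mono fun _ hk => lt_of_lt_of_le hk hij))

theorem pSpan_succ_le (k : Fin n) :
    pSpan M x (Order.succ k) ≤ pSpan M x k ⊔ Ideal.span {x k} • ⊤ := by
  have hprefix : {j | j < Order.succ k} ⊆ {j | j < k} ∪ {k} := fun j (hj : j < Order.succ k) =>
    (Order.le_of_lt_succ hj).lt_or_eq
  rw [pSpan, pSpan, ← Submodule.sup_smul, ← Ideal.span_union, ← Set.image_singleton,
    ← Set.image_union]
  exact Submodule.smul_mono_left (Ideal.span_mono (Set.image_mono hprefix))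

theorem mem_pSpan_of_le_of_smul_mem
    (hsq : ∀ k : Fin n, ∀ u : M, x k ^ 2 • u ∈ pSpan M x k → x k • u ∈ pSpan M x k)
    {i j : Fin n} (hij : i ≤ j) {m : M} (hxm : ∀ k ≥ i, x k • m ∈ pSpan M x i)
    (hm : m ∈ pSpan M x j) : m ∈ pSpan M x i := by
  induction hij using Succ.rec with
  | rfl => exact hm
  | succ k hik ih =>
    exact ih (mem_of_smul_mem_of_mem_sup (hsq k) (pSpan_mono hik (hxm k hik)) (pSpan_succ_le k hm))

theorem IsWeakSeq.of_sq_smul_mem {I : Ideal R}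
    (hsq : ∀ i : Fin n, ∀ m : M, x i ^ 2 • m ∈ pSpan M x i → ∀ r ∈ I, r • m ∈ pSpan M x i) :
    IsWeakSeq I M x := fun i m hm => hsq i m <| by
  rw [sq, mul_smul]
  exact Submodule.smul_mem _ _ hm

theorem IsWeakSeq.isDSeq {I : Ideal R} (hweak : IsWeakSeq I M x) (hxI : ∀ j, x j ∈ I)
    (hsq : ∀ k : Fin n, ∀ u : M, x k ^ 2 • u ∈ pSpan M x k → x k • u ∈ pSpan M x k) :
    IsDSeq M x := by
  intro i j hij m
  rw [mul_smul]
  refine ⟨fun hm => ?_, fun hm => Submodule.smul_mem _ _ hm⟩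
  have hcolon : ∀ k, x k • x j • m ∈ pSpan M x i := fun k => hweak i _ hm _ (hxI k)
  have hxjm : x j • m ∈ pSpan M x j := hsq j m <| by
    rw [sq, mul_smul]
    exact pSpan_mono hij (hcolon j)
  exact mem_pSpan_of_le_of_smul_mem hsq hij (fun k _ => hcolon k) hxjm

end PrefixSpan

theorem lemma_4_7_general (I : Ideal R) (M : Type) [AddCommGroup M] [Module R M]
    {n : ℕ} (x : Fin n → R) (hxI : ∀ j, x j ∈ I)
    (hsq : ∀ i : Fin n, ∀ m : M, x i ^ 2 • m ∈ pSpan M x i → ∀ r ∈ I, r • m ∈ pSpan M x i) :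
    IsWeakSeq I M x ∧ IsDSeq M x := by
  have hweak : IsWeakSeq I M x := .of_sq_smul_mem hsq
  exact ⟨hweak, hweak.isDSeq hxI fun k u hu => hsq k u hu _ (hxI k)⟩

/-- **Lemma 4.7.** Let `x₁, …, xₙ ∈ I`. If `I • Γ_{⟨x_{k+1}⟩}(M/⟨x₁,…,x_k⟩M) = 0` for all
`0 ≤ k ≤ n-1` (expressed elementwise: whenever some power of `x_{k+1}` multiplies `m` into
`⟨x₁,…,x_k⟩M`, then `I • m ⊆ ⟨x₁,…,x_k⟩M`), then `x₁, …, xₙ` is both an `I`-weak sequence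
on `M` and a d-sequence on `M`. -/
theorem lemma_4_7 [IsNoetherianRing R] (I : Ideal R)
    (M : Type) [AddCommGroup M] [Module R M] [Module.Finite R M]
    {n : ℕ} (x : Fin n → R) (hxI : ∀ j, x j ∈ I)
    (hGamma : ∀ i : Fin n, ∀ m : M,
      (∃ t : ℕ, x i ^ t • m ∈ pSpan M x i) → ∀ r ∈ I, r • m ∈ pSpan M x i) :
    IsWeakSeq I M x ∧ IsDSeq M x :=
  lemma_4_7_general I M x hxI fun i m hm => hGamma i m ⟨2, hm⟩
end
end
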